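/- Let n be a positive integer, μ > 0 and d ≥ 0 real numbers, and m : {1,…,n} → ℝ a function with m_j ≥ 0 for all j and Σ_{j=1}^{n} m_j ≤ n. Let A ⊆ {1,…,n} be such that for every j ∈ A, μ·(n/j − 1) ≤ m_j/2 + d. Then Σ_{j∈A} 1/j ≤ (1 + 2(d+μ))/(2μ). -/

import Mathlib

/-!
Moving `μ` to the right-hand side, each `j ∈ A` satisfies `μ * n / j ≤ m j / 2 + (d + μ)`. In the
sum over `A`, the values `m j` contribute at most `n / 2` and the at most `n` constants at most
`n * (d + μ)`, so the factor `n` cancels and leaves a bound that does not depend on `n`.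
-/

open Finset

theorem sum_le_mul_of_forall_le_mul_add {ι R : Type*} [CommSemiring R] [PartialOrder R]
    [IsOrderedRing R] {A : Finset ι} {f m : ι → R} {N b c : R} (hb : 0 ≤ b) (hc : 0 ≤ c)
    (hcard : (#A : R) ≤ N) (hm : ∑ j ∈ A, m j ≤ N) (hf : ∀ j ∈ A, f j ≤ b * m j + c) :
    ∑ j ∈ A, f j ≤ N * (b + c) :=
  calc ∑ j ∈ A, f j
      ≤ ∑ j ∈ A, (b * m j + c) := sum_le_sum hf
    _ = b * ∑ j ∈ A, m j + #A * c := by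
        rw [sum_add_distrib, ← mul_sum, sum_const, nsmul_eq_mul]
    _ ≤ b * N + N * c := by gcongr
    _ = N * (b + c) := by ring

/-- The weights `w j` play the role of the reciprocals `1 / j`. -/
theorem stmt6_general {ι K : Type*} [Field K] [LinearOrder K] [IsStrictOrderedRing K]
    {A : Finset ι} {w m : ι → K} {N μ d : K} (hN : 0 < N) (hμ : 0 < μ) (hdμ : 0 ≤ d + μ)
    (hcard : (#A : K) ≤ N) (hm : ∑ j ∈ A, m j ≤ N)
    (hw : ∀ j ∈ A, μ * (N * w j - 1) ≤ m j / 2 + d) :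
    ∑ j ∈ A, w j ≤ (1 + 2 * (d + μ)) / (2 * μ) := by
  have weight_le : ∀ j ∈ A, N * (μ * w j) ≤ 1 / 2 * m j + (d + μ) := fun j hj ↦ by
    linarith [hw j hj]
  have scaled_sum_le : N * (μ * ∑ j ∈ A, w j) ≤ N * (1 / 2 + (d + μ)) := by
    simpa only [mul_sum] using
      sum_le_mul_of_forall_le_mul_add one_half_pos.le hdμ hcard hm weight_le
  have sum_le : μ * ∑ j ∈ A, w j ≤ 1 / 2 + (d + μ) := le_of_mul_le_mul_left scaled_sum_le hN
  rw [le_div_iff₀ (by positivity)]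
  linarith

theorem stmt6 (n : ℕ) (hn : 1 ≤ n) (μ d : ℝ) (hμ : 0 < μ) (hd : 0 ≤ d)
    (m : ℕ → ℝ) (hm0 : ∀ j ∈ Finset.Icc 1 n, 0 ≤ m j)
    (hmsum : ∑ j ∈ Finset.Icc 1 n, m j ≤ n)
    (A : Finset ℕ) (hA : A ⊆ Finset.Icc 1 n)
    (hineq : ∀ j ∈ A, μ * ((n : ℝ) / j - 1) ≤ m j / 2 + d) :
    ∑ j ∈ A, (1 : ℝ) / j ≤ (1 + 2 * (d + μ)) / (2 * μ) :=
  stmt6_general (Nat.cast_pos.2 hn) hμ (add_nonneg hd hμ.le) (by simpa using card_le_card hA)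
    ((sum_le_sum_of_subset_of_nonneg hA fun j hj _ ↦ hm0 j hj).trans hmsum)
    (by simpa only [mul_one_div] using hineq)
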